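/- Let x, y ∈ ℝⁿ with x ≠ y. Then the Kuratowski–Painlevé limit of the sequence of generalized lines D^{(p)}(x,y) exists and equals D^∞(x,y): every point of D^∞(x,y) is the limit of a sequence z^{(p)} with z^{(p)} ∈ D^{(p)}(x,y), and every limit of a convergent subsequence of points taken from the D^{(p)}(x,y) belongs to D^∞(x,y). -/

import Mathlib

/-! Write `q = 2p + 1` and `R_p` for the real `q`-th root `oddRoot p`. Everything rests on two limits.

* `tendsto_Fop`: for a fixed finite family, `R_p (∑ u_i ^ q) → ⊞ u_i`. Grouping the sum by absolute
  values gives `∑ ξ(a) a ^ q`, which is governed by the largest `a` with `ξ(a) ≠ 0`.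
* `tendsto_bop`: if `u_k → u`, `v_k → v` and no cancellation occurs (`u = -v` only when both
  vanish), then `R (u_k ^ q + v_k ^ q) → bop u v`.

Lower limit: if `⊞(t, r, s, w) = 1`, the scalars `R_p (t ^ q + r ^ q)` and `R_p (s ^ q + w ^ q)`,
normalised by `R_p (t ^ q + r ^ q + s ^ q + w ^ q) → 1`, give points of the `φ_p`-lines converging
to the point of `D^∞` with parameters `t, r, s, w`.

Upper limit: let `(t_k, s_k)` be the parameters of a convergent sequence of points. Since `x ≠ y` in
some coordinate, these parameters are bounded, so along an ultrafilter they have limits `T, S`. In a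
coordinate with `T x_i ≠ -S y_i` the limit is `bop (T x_i) (S y_i)`. The coordinates where
`T x_i = -S y_i` are all proportional to `(S, -T)`, so a single further limit
`Λ = lim R ((t_k S) ^ q + (-s_k T) ^ q)` with `|Λ| ≤ |S T|` determines them, and one of the
parameter choices `(T, 0, S, -Λ/T)`, `(T, T, S, 0)` reproduces all coordinates at once. The
normalisation `⊞ = 1` is the same statement for the extra coordinate `x = y = 1`, with limit `1`. -/

open Filter Finset

/-- The binary idempotent operation `⊞`. -/
noncomputable def bop (a b : ℝ) : ℝ :=
  if |b| < |a| then a else if |a| < |b| then b else (a + b) / 2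

/-- The unique real `(2p+1)`-th root of `t`. -/
noncomputable def oddRoot (p : ℕ) (t : ℝ) : ℝ :=
  Real.sign t * |t| ^ ((1 : ℝ) / (2 * (p : ℝ) + 1))

/-- `ξ_I[u](α) = Card{i ∈ I : u i = α} − Card{i ∈ I : u i = −α}`. -/
noncomputable def xiMap {ι : Type*} (I : Finset ι) (u : ι → ℝ) (α : ℝ) : ℤ :=
  ((I.filter fun i => u i = α).card : ℤ) - ((I.filter fun i => u i = -α).card : ℤ)

/-- The residual index set `J_I(u)`. -/
noncomputable def resid {ι : Type*} (I : Finset ι) (u : ι → ℝ) : Finset ι :=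
  I.filter fun i => xiMap I u (u i) ≠ 0

/-- The `n`-ary extension `⊞_{i ∈ I} u i` of the binary operation `⊞`. -/
noncomputable def Fop {ι : Type*} (I : Finset ι) (u : ι → ℝ) : ℝ :=
  if h : (resid I u).Nonempty then
    if 0 < xiMap I u ((resid I u).sup' h fun i => |u i|) then (resid I u).sup' h u
    else if xiMap I u ((resid I u).sup' h fun i => |u i|) < 0 then (resid I u).inf' h u
    else 0
  else 0

/-- The Chebyshev norm `max_{i ∈ [n]} |x i|`. -/
noncomputable def chebNorm {n : ℕ} (x : Fin n → ℝ) : ℝ := ⨆ i, |x i|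

/-- The ultrametric distance `d_⊞(x,y) = max_i |x_i ⊟ y_i|`. -/
noncomputable def dB {n : ℕ} (x y : Fin n → ℝ) : ℝ := ⨆ i, |bop (x i) (-(y i))|

/-- The `φ_p`-line through `x` and `y`. -/
noncomputable def phiLine (p : ℕ) {n : ℕ} (x y : Fin n → ℝ) : Set (Fin n → ℝ) :=
  { z | ∃ s t : ℝ, oddRoot p (s ^ (2 * p + 1) + t ^ (2 * p + 1)) = 1 ∧
      z = fun i => oddRoot p ((t * x i) ^ (2 * p + 1) + (s * y i) ^ (2 * p + 1)) }

/-- The F-line `D^∞(x,y)`. -/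
noncomputable def fLine {n : ℕ} (x y : Fin n → ℝ) : Set (Fin n → ℝ) :=
  { z | ∃ t r s w : ℝ, Fop (Finset.univ : Finset (Fin 4)) ![t, r, s, w] = 1 ∧
      z = fun i => Fop (Finset.univ : Finset (Fin 4)) ![t * x i, r * x i, s * y i, w * y i] }

/-! ### Odd roots -/

lemma oddRoot_pow (p : ℕ) (t : ℝ) : oddRoot p t ^ (2 * p + 1) = t := by
  have hq : (0 : ℝ) < 2 * (p : ℝ) + 1 := by positivity
  have key : (|t| ^ ((1 : ℝ) / (2 * (p : ℝ) + 1))) ^ (2 * p + 1) = |t| := by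
    rw [← Real.rpow_natCast, ← Real.rpow_mul (abs_nonneg t)]
    push_cast
    rw [one_div, inv_mul_cancel₀ hq.ne', Real.rpow_one]
  unfold oddRoot
  rw [mul_pow, key]
  rcases lt_trichotomy t 0 with h | h | h
  · rw [Real.sign_of_neg h, Odd.neg_one_pow ⟨p, rfl⟩, abs_of_neg h]; ring
  · simp [h]
  · rw [Real.sign_of_pos h, one_pow, abs_of_pos h, one_mul]

lemma odd_pow_strictMono (p : ℕ) : StrictMono fun a : ℝ => a ^ (2 * p + 1) :=
  Odd.strictMono_pow ⟨p, rfl⟩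

lemma oddRoot_eq {p : ℕ} {t a : ℝ} (h : t = a ^ (2 * p + 1)) : oddRoot p t = a :=
  (odd_pow_strictMono p).injective (by simpa [oddRoot_pow] using h)

lemma oddRoot_mono (p : ℕ) : Monotone (oddRoot p) := fun a b h => by
  rw [← (odd_pow_strictMono p).le_iff_le]
  simpa [oddRoot_pow] using h

lemma oddRoot_pow_mul (p : ℕ) (a t : ℝ) :
    oddRoot p (a ^ (2 * p + 1) * t) = a * oddRoot p t :=
  oddRoot_eq (by rw [mul_pow, oddRoot_pow])

lemma neg_odd_pow (p : ℕ) (a : ℝ) : (-a) ^ (2 * p + 1) = -a ^ (2 * p + 1) :=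
  Odd.neg_pow ⟨p, rfl⟩ a

lemma abs_oddRoot_le {p : ℕ} {t a : ℝ} (ha : 0 ≤ a) (h : |t| ≤ a ^ (2 * p + 1)) :
    |oddRoot p t| ≤ a := by
  refine le_of_pow_le_pow_left₀ (n := 2 * p + 1) (by omega) ha ?_
  rwa [← abs_pow, oddRoot_pow]

lemma abs_oddRoot_add_le (p : ℕ) (u v : ℝ) :
    |oddRoot p (u ^ (2 * p + 1) + v ^ (2 * p + 1))| ≤ |u| + |v| := by
  refine abs_oddRoot_le (by positivity) ((abs_add_le _ _).trans ?_)
  rw [abs_pow, abs_pow]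
  exact pow_add_pow_le (abs_nonneg _) (abs_nonneg _) (by omega)

/-- The `φ_p`-sum exceeds the maximum of absolute values at most by the factor `R_p 2`, which
tends to `1`; this gives the sharp bound `|Λ| ≤ |S T|` in the limit. -/
lemma abs_oddRoot_add_le_max (p : ℕ) (u v : ℝ) :
    |oddRoot p (u ^ (2 * p + 1) + v ^ (2 * p + 1))| ≤ max |u| |v| * oddRoot p 2 := by
  have h2 : 0 ≤ oddRoot p 2 := by
    have := oddRoot_mono p (show (0 : ℝ) ≤ 2 by norm_num)
    rwa [oddRoot_eq (p := p) (t := 0) (a := 0) (by simp)] at this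
  refine abs_oddRoot_le (by positivity) ((abs_add_le _ _).trans ?_)
  rw [abs_pow, abs_pow, mul_pow, oddRoot_pow]
  have h1 := pow_le_pow_left₀ (abs_nonneg u) (le_max_left |u| |v|) (2 * p + 1)
  have h2 := pow_le_pow_left₀ (abs_nonneg v) (le_max_right |u| |v|) (2 * p + 1)
  linarith

/-! ### Limits of roots of sums -/

section Limits

variable {κ : Type*} {l : Filter κ} {p : κ → ℕ}

lemma tendsto_odd_exponent (hp : Tendsto p l atTop) :
    Tendsto (fun k => 2 * p k + 1) l atTop :=
  tendsto_atTop_mono (fun k => by omega) hp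

lemma tendsto_oddRoot (hp : Tendsto p l atTop) {c : κ → ℝ} {c₀ : ℝ} (hc : Tendsto c l (nhds c₀))
    (h0 : c₀ ≠ 0) : Tendsto (fun k => oddRoot (p k) (c k)) l (nhds (Real.sign c₀)) := by
  have he : Tendsto (fun k => (1 : ℝ) / (2 * (p k : ℝ) + 1)) l (nhds 0) := by
    have := (tendsto_inv_atTop_zero (𝕜 := ℝ)).comp
      (tendsto_natCast_atTop_atTop.comp (tendsto_odd_exponent hp))
    refine this.congr fun k => ?_
    simp
  have hr : Tendsto (fun k => |c k| ^ ((1 : ℝ) / (2 * (p k : ℝ) + 1))) l (nhds 1) := by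
    have := hc.abs.rpow he (Or.inl (abs_ne_zero.2 h0))
    rwa [Real.rpow_zero] at this
  have hs : ∀ᶠ k in l, Real.sign (c k) = Real.sign c₀ := by
    rcases h0.lt_or_gt with h | h
    · filter_upwards [hc.eventually (gt_mem_nhds h)] with k hk
      rw [Real.sign_of_neg hk, Real.sign_of_neg h]
    · filter_upwards [hc.eventually (lt_mem_nhds h)] with k hk
      rw [Real.sign_of_pos hk, Real.sign_of_pos h]
  have := hr.const_mul (Real.sign c₀)
  rw [mul_one] at this
  refine this.congr' ?_
  filter_upwards [hs] with k hk
  rw [oddRoot, hk]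

/-- Geometric decay when the base itself varies. -/
lemma tendsto_pow_zero (hp : Tendsto p l atTop) {a : κ → ℝ} {a₀ : ℝ} (ha : Tendsto a l (nhds a₀))
    (h : |a₀| < 1) : Tendsto (fun k => a k ^ (2 * p k + 1)) l (nhds 0) := by
  obtain ⟨b, hb, hb1⟩ := exists_between h
  have hb0 : 0 ≤ b := (abs_nonneg _).trans hb.le
  refine squeeze_zero_norm' ?_
    ((tendsto_pow_atTop_nhds_zero_of_lt_one hb0 hb1).comp (tendsto_odd_exponent hp))
  filter_upwards [ha.abs.eventually (gt_mem_nhds hb)] with k hk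
  rw [Real.norm_eq_abs, abs_pow]
  exact pow_le_pow_left₀ (abs_nonneg _) hk.le _

lemma tendsto_dominant (hp : Tendsto p l atTop) {u v : κ → ℝ} {u₀ v₀ : ℝ}
    (hu : Tendsto u l (nhds u₀)) (hv : Tendsto v l (nhds v₀)) (h : |v₀| < |u₀|) :
    Tendsto (fun k => oddRoot (p k) (u k ^ (2 * p k + 1) + v k ^ (2 * p k + 1))) l (nhds u₀) := by
  have hu0 : u₀ ≠ 0 := abs_pos.1 ((abs_nonneg _).trans_lt h)
  have h1 := tendsto_pow_zero hp (hv.div hu hu0)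
    (by rw [abs_div, div_lt_one (abs_pos.2 hu0)]; exact h)
  have h2 := hu.mul (tendsto_oddRoot hp (h1.const_add 1) (by norm_num))
  rw [add_zero, Real.sign_one, mul_one] at h2
  refine h2.congr' ?_
  filter_upwards [hu.eventually_ne hu0] with k hk
  rw [← oddRoot_pow_mul]
  congr 1
  simp only [Pi.div_apply, div_pow]
  field_simp

/-- `bop` is the joint limit of the binary `φ_p`-sums away from its discontinuities `u = -v ≠ 0`. -/
lemma tendsto_bop (hp : Tendsto p l atTop) {u v : κ → ℝ} {u₀ v₀ : ℝ}
    (hu : Tendsto u l (nhds u₀)) (hv : Tendsto v l (nhds v₀)) (h : u₀ = -v₀ → v₀ = 0) :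
    Tendsto (fun k => oddRoot (p k) (u k ^ (2 * p k + 1) + v k ^ (2 * p k + 1))) l
      (nhds (bop u₀ v₀)) := by
  unfold bop
  split_ifs with h1 h2
  · exact tendsto_dominant hp hu hv h1
  · simpa only [add_comm] using tendsto_dominant hp hv hu h2
  · have huv : u₀ = v₀ := by
      rcases abs_eq_abs.1 (le_antisymm (not_lt.1 h1) (not_lt.1 h2)) with h3 | h3
      · exact h3
      · rw [h3, h h3, neg_zero]
    subst huv
    have h2 := tendsto_oddRoot hp (tendsto_const_nhds (x := (2 : ℝ)) (f := l)) two_ne_zero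
    rw [Real.sign_of_pos two_pos] at h2
    have hmin := (hu.min hv).mul h2
    have hmax := (hu.max hv).mul h2
    rw [min_self, mul_one] at hmin
    rw [max_self, mul_one] at hmax
    rw [show (u₀ + u₀) / 2 = u₀ by ring]
    refine tendsto_of_tendsto_of_tendsto_of_le_of_le hmin hmax (fun k => ?_) (fun k => ?_)
    · simp only [← oddRoot_pow_mul]
      apply oddRoot_mono
      have a1 := (odd_pow_strictMono (p k)).monotone (min_le_left (u k) (v k))
      have a2 := (odd_pow_strictMono (p k)).monotone (min_le_right (u k) (v k))
      linarith
    · simp only [← oddRoot_pow_mul]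
      apply oddRoot_mono
      have a1 := (odd_pow_strictMono (p k)).monotone (le_max_left (u k) (v k))
      have a2 := (odd_pow_strictMono (p k)).monotone (le_max_right (u k) (v k))
      linarith

lemma bop_ne_zero {u v : ℝ} (h : u + v ≠ 0) : bop u v ≠ 0 := by
  unfold bop
  split_ifs with h1 h2
  · exact abs_pos.1 ((abs_nonneg _).trans_lt h1)
  · exact abs_pos.1 ((abs_nonneg _).trans_lt h2)
  · exact div_ne_zero h two_ne_zero

end Limits

/-! ### The operation `⊞` as a limit -/

section FopLimit

variable {ι : Type*} (I : Finset ι) (u : ι → ℝ)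

lemma xiMap_neg (a : ℝ) : xiMap I u (-a) = -xiMap I u a := by
  simp [xiMap]

lemma xiMap_abs_eq_zero {a : ℝ} : xiMap I u |a| = 0 ↔ xiMap I u a = 0 := by
  rcases abs_choice a with h | h <;> simp [h, xiMap_neg]

lemma exists_of_xiMap_pos {a : ℝ} (h : 0 < xiMap I u a) : ∃ i ∈ I, u i = a := by
  by_contra! hc
  have : I.filter (fun i => u i = a) = ∅ := filter_eq_empty_iff.2 fun i hi => hc i hi
  rw [xiMap, this] at h
  simp at h
  omega

/-- Opposite terms cancel in a sum of odd powers, so only the multiplicities `ξ` remain. -/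
lemma sum_odd_pow (p : ℕ) :
    ∑ i ∈ I, u i ^ (2 * p + 1) =
      ∑ a ∈ I.image (fun i => |u i|), (xiMap I u a : ℝ) * a ^ (2 * p + 1) := by
  rw [← Finset.sum_fiberwise_of_maps_to (s := I) (t := I.image fun i => |u i|)
    (g := fun i => |u i|) (fun i hi => mem_image_of_mem _ hi)]
  classical
  refine Finset.sum_congr rfl fun a ha => ?_
  obtain ⟨j, -, rfl⟩ := mem_image.1 ha
  set a := |u j| with hadef
  have ha0 : 0 ≤ a := abs_nonneg _
  rcases ha0.eq_or_lt with h0 | hpos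
  · rw [← h0]
    simp only [ne_eq, Nat.add_eq_zero_iff, one_ne_zero, and_false, not_false_eq_true, zero_pow,
      mul_zero]
    refine Finset.sum_eq_zero fun i hi => ?_
    rw [abs_eq_zero.1 (mem_filter.1 hi).2, zero_pow (by omega)]
  · have hsplit : I.filter (fun i => |u i| = a) =
        (I.filter fun i => u i = a) ∪ (I.filter fun i => u i = -a) := by
      ext i
      simp only [mem_filter, mem_union, abs_eq ha0]
      tauto
    have hdisj : Disjoint (I.filter fun i => u i = a) (I.filter fun i => u i = -a) := by
      rw [Finset.disjoint_left]
      intro i h1 h2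
      have h1 := (mem_filter.1 h1).2
      have h2 := (mem_filter.1 h2).2
      linarith
    rw [hsplit, sum_union hdisj,
      Finset.sum_congr rfl (g := fun _ => a ^ (2 * p + 1)) (fun i hi => by
        rw [(mem_filter.1 hi).2]),
      Finset.sum_congr rfl (s₁ := I.filter fun i => u i = -a) (g := fun _ => -a ^ (2 * p + 1))
        (fun i hi => by rw [(mem_filter.1 hi).2, neg_odd_pow])]
    simp only [sum_const, nsmul_eq_mul, xiMap]
    push_cast
    ring

/-- The operation `⊞` is the pointwise limit of the `φ_p`-sums. -/
theorem tendsto_Fop {κ : Type*} {l : Filter κ} {p : κ → ℕ} (hp : Tendsto p l atTop) :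
    Tendsto (fun k => oddRoot (p k) (∑ i ∈ I, u i ^ (2 * p k + 1))) l (nhds (Fop I u)) := by
  unfold Fop
  by_cases h : (resid I u).Nonempty
  · rw [dif_pos h]
    set M := (resid I u).sup' h fun i => |u i| with hM
    obtain ⟨j, hj, hjM⟩ := exists_mem_eq_sup' h fun i => |u i|
    rw [← hM] at hjM
    have hle : ∀ i ∈ resid I u, |u i| ≤ M := fun i hi => le_sup' (fun i => |u i|) hi
    have hj' : j ∈ I ∧ xiMap I u (u j) ≠ 0 := mem_filter.1 hj
    have hxi : xiMap I u M ≠ 0 := by rw [hjM, Ne, xiMap_abs_eq_zero]; exact hj'.2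
    have hMpos : 0 < M := by
      rcases (show 0 ≤ M from hjM ▸ abs_nonneg _).eq_or_lt with h0 | h0
      · exact absurd (by simp [← h0, xiMap]) hxi
      · exact h0
    have hlim : Tendsto (fun k => ∑ a ∈ I.image (fun i => |u i|),
        (xiMap I u a : ℝ) * (a / M) ^ (2 * p k + 1)) l (nhds (xiMap I u M : ℝ)) := by
      have hsum : (xiMap I u M : ℝ) =
          ∑ a ∈ I.image (fun i => |u i|), if a = M then (xiMap I u M : ℝ) else 0 := by
        rw [Finset.sum_ite_eq', if_pos]
        exact mem_image.2 ⟨j, hj'.1, hjM.symm⟩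
      rw [hsum]
      refine tendsto_finsetSum _ fun a ha => ?_
      obtain ⟨i, hi, rfl⟩ := mem_image.1 ha
      by_cases hx : xiMap I u |u i| = 0
      · rw [if_neg (fun h => hxi (by rw [← h, hx])), hx]
        simpa using tendsto_const_nhds
      · have hir : i ∈ resid I u := mem_filter.2 ⟨hi, by rwa [xiMap_abs_eq_zero] at hx⟩
        rcases (hle i hir).eq_or_lt with he | hlt
        · rw [if_pos he, he, div_self hMpos.ne']
          simpa using tendsto_const_nhds
        · rw [if_neg hlt.ne]
          have := (tendsto_pow_zero hp (tendsto_const_nhds (x := |u i| / M) (f := l)) (by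
            rw [abs_div, abs_abs, abs_of_pos hMpos, div_lt_one hMpos]
            exact hlt)).const_mul (xiMap I u |u i| : ℝ)
          rwa [mul_zero] at this
    have hroot := (tendsto_oddRoot hp hlim (by exact_mod_cast hxi)).const_mul M
    have hroot' : Tendsto (fun k => oddRoot (p k) (∑ i ∈ I, u i ^ (2 * p k + 1))) l
        (nhds (M * Real.sign (xiMap I u M : ℝ))) := by
      refine hroot.congr fun k => ?_
      rw [← oddRoot_pow_mul, sum_odd_pow, Finset.mul_sum]
      congr 1
      refine Finset.sum_congr rfl fun a _ => ?_
      rw [div_pow]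
      field_simp
    rcases hxi.lt_or_gt with hneg | hpos
    · rw [if_neg hneg.not_gt, if_pos hneg]
      have hinf : (resid I u).inf' h u = -M := by
        apply le_antisymm
        · obtain ⟨i, hi, hiM⟩ := exists_of_xiMap_pos I u (a := -M) (by rw [xiMap_neg]; omega)
          rw [← hiM]
          exact inf'_le _ (mem_filter.2 ⟨hi, by rw [hiM, xiMap_neg]; omega⟩)
        · exact le_inf' _ _ fun i hi => neg_le_of_abs_le (hle i hi)
      rw [Real.sign_of_neg (by exact_mod_cast hneg)] at hroot'
      rw [hinf]
      simpa using hroot'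
    · rw [if_pos hpos]
      have hsup : (resid I u).sup' h u = M := by
        apply le_antisymm
        · exact sup'_le _ _ fun i hi => (le_abs_self _).trans (hle i hi)
        · obtain ⟨i, hi, hiM⟩ := exists_of_xiMap_pos I u hpos
          rw [← hiM]
          exact le_sup' u (mem_filter.2 ⟨hi, by rw [hiM]; exact hxi⟩)
      rw [Real.sign_of_pos (by exact_mod_cast hpos)] at hroot'
      rw [hsup]
      simpa using hroot'
  · rw [dif_neg h]
    have hz : ∀ k, oddRoot (p k) (∑ i ∈ I, u i ^ (2 * p k + 1)) = 0 := fun k => by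
      refine oddRoot_eq ?_
      rw [sum_odd_pow, zero_pow (by omega)]
      refine Finset.sum_eq_zero fun a ha => ?_
      obtain ⟨i, hi, rfl⟩ := mem_image.1 ha
      have hx : xiMap I u (u i) = 0 := by
        by_contra hne
        exact h ⟨i, mem_filter.2 ⟨hi, hne⟩⟩
      rw [(xiMap_abs_eq_zero I u).2 hx]
      simp
    simp only [hz]
    exact tendsto_const_nhds

end FopLimit

lemma tendsto_Fop_four {κ : Type*} {l : Filter κ} {p : κ → ℕ} (hp : Tendsto p l atTop)
    (a b c d : ℝ) :
    Tendsto (fun k => oddRoot (p k)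
      (a ^ (2 * p k + 1) + b ^ (2 * p k + 1) + c ^ (2 * p k + 1) + d ^ (2 * p k + 1))) l
      (nhds (Fop (Finset.univ : Finset (Fin 4)) ![a, b, c, d])) := by
  simpa [Fin.sum_univ_four] using tendsto_Fop (Finset.univ : Finset (Fin 4)) ![a, b, c, d] hp

lemma Fop_four_eq {a b c d z : ℝ}
    (h : Tendsto (fun p => oddRoot p
      (a ^ (2 * p + 1) + b ^ (2 * p + 1) + c ^ (2 * p + 1) + d ^ (2 * p + 1))) atTop (nhds z)) :
    Fop (Finset.univ : Finset (Fin 4)) ![a, b, c, d] = z :=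
  tendsto_nhds_unique (tendsto_Fop_four tendsto_id a b c d) h

lemma Fop_pair {a c : ℝ} (h : a = -c → c = 0) :
    Fop (Finset.univ : Finset (Fin 4)) ![a, 0, c, 0] = bop a c := by
  refine Fop_four_eq ?_
  have := tendsto_bop tendsto_id (tendsto_const_nhds (x := a) (f := atTop))
    (tendsto_const_nhds (x := c)) h
  refine this.congr fun p => ?_
  simp

lemma Fop_cancel (c d : ℝ) :
    Fop (Finset.univ : Finset (Fin 4)) ![-c, 0, c, d] = d := by
  refine Fop_four_eq (tendsto_const_nhds.congr fun p => (oddRoot_eq ?_).symm)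
  rw [neg_odd_pow]
  simp

lemma Fop_cancel' (c : ℝ) :
    Fop (Finset.univ : Finset (Fin 4)) ![-c, -c, c, 0] = -c := by
  refine Fop_four_eq (tendsto_const_nhds.congr fun p => (oddRoot_eq ?_).symm)
  rw [neg_odd_pow]
  simp

/-- A fourth term `d` that is dominated by `c`, or equal to it, does not matter unless `a` cancels
`c`. -/
lemma Fop_absorb {a c d : ℝ} (hd : |d| < |c| ∨ d = c) (h : a = -c → c = 0) :
    Fop (Finset.univ : Finset (Fin 4)) ![a, 0, c, d] = bop a c := by
  have hcd : Tendsto (fun p => oddRoot p (c ^ (2 * p + 1) + d ^ (2 * p + 1))) atTop (nhds c) := by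
    rcases hd with hd | rfl
    · exact tendsto_dominant tendsto_id tendsto_const_nhds tendsto_const_nhds hd
    · have := tendsto_bop tendsto_id (tendsto_const_nhds (x := d) (f := atTop))
        (tendsto_const_nhds (x := d)) (fun h => by linarith)
      simpa [bop] using this
  refine Fop_four_eq ((tendsto_bop tendsto_id (tendsto_const_nhds (x := a)) hcd h).congr
    fun p => ?_)
  simp only [id, oddRoot_pow]
  congr 1
  simp
  ring

lemma Fop_double {a c : ℝ} (h : a = -c → c = 0) :
    Fop (Finset.univ : Finset (Fin 4)) ![a, a, c, 0] = bop a c := by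
  have haa : Tendsto (fun p => oddRoot p (a ^ (2 * p + 1) + a ^ (2 * p + 1))) atTop (nhds a) := by
    have := tendsto_bop tendsto_id (tendsto_const_nhds (x := a) (f := atTop))
      (tendsto_const_nhds (x := a)) (fun h => by linarith)
    simpa [bop] using this
  refine Fop_four_eq ((tendsto_bop tendsto_id haa (tendsto_const_nhds (x := c)) h).congr
    fun p => ?_)
  simp only [id, oddRoot_pow]
  congr 1
  simp

/-! ### The lower limit -/

lemma exists_phiLine (p : ℕ) {n : ℕ} (x y : Fin n → ℝ) (t r s w : ℝ) :
    ∃ v ∈ phiLine p x y,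
      oddRoot p (t ^ (2 * p + 1) + r ^ (2 * p + 1) + s ^ (2 * p + 1) + w ^ (2 * p + 1)) ≠ 0 →
      ∀ i, v i =
        oddRoot p ((t * x i) ^ (2 * p + 1) + (r * x i) ^ (2 * p + 1) + (s * y i) ^ (2 * p + 1) +
          (w * y i) ^ (2 * p + 1)) /
        oddRoot p (t ^ (2 * p + 1) + r ^ (2 * p + 1) + s ^ (2 * p + 1) + w ^ (2 * p + 1)) := by
  set N := oddRoot p (t ^ (2 * p + 1) + r ^ (2 * p + 1) + s ^ (2 * p + 1) + w ^ (2 * p + 1))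
    with hN
  have hNq : N ^ (2 * p + 1) =
      t ^ (2 * p + 1) + r ^ (2 * p + 1) + s ^ (2 * p + 1) + w ^ (2 * p + 1) := oddRoot_pow _ _
  by_cases h0 : N = 0
  · exact ⟨_, ⟨1, 0, oddRoot_eq (by simp), rfl⟩, fun h => absurd h0 h⟩
  · refine ⟨_, ⟨oddRoot p (s ^ (2 * p + 1) + w ^ (2 * p + 1)) / N,
      oddRoot p (t ^ (2 * p + 1) + r ^ (2 * p + 1)) / N, oddRoot_eq ?_, rfl⟩, fun _ i => ?_⟩
    · have hq : N ^ (2 * p + 1) ≠ 0 := pow_ne_zero _ h0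
      rw [div_pow, div_pow, oddRoot_pow p (s ^ _ + _), oddRoot_pow p (t ^ _ + r ^ _), ← add_div,
        one_pow, div_eq_one_iff_eq hq, hNq]
      ring
    · refine oddRoot_eq ?_
      rw [mul_pow, mul_pow, div_pow, div_pow, div_pow, oddRoot_pow p (s ^ _ + _),
        oddRoot_pow p (t ^ _ + r ^ _), oddRoot_pow p ((t * x i) ^ _ + _ + _ + _)]
      simp only [mul_pow]
      ring

lemma lower_limit {n : ℕ} (x y z : Fin n → ℝ) (hz : z ∈ fLine x y) :
    ∃ u : ℕ → (Fin n → ℝ),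
      (∀ p : ℕ, u p ∈ phiLine p x y) ∧ Filter.Tendsto u Filter.atTop (nhds z) := by
  obtain ⟨t, r, s, w, h1, rfl⟩ := hz
  choose u hu hu' using fun p => exists_phiLine p x y t r s w
  refine ⟨u, hu, tendsto_pi_nhds.2 fun i => ?_⟩
  have hN := tendsto_Fop_four tendsto_id t r s w
  rw [h1] at hN
  have hi := (tendsto_Fop_four tendsto_id (t * x i) (r * x i) (s * y i) (w * y i)).div hN
    one_ne_zero
  rw [div_one] at hi
  refine hi.congr' ?_
  filter_upwards [hN.eventually_ne one_ne_zero] with p hp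
  exact (hu' p hp i).symm

/-! ### The upper limit -/

lemma Ultrafilter.exists_tendsto_of_bounded {κ : Type*} (U : Ultrafilter κ) {f : κ → ℝ} {C : ℝ}
    (h : ∀ᶠ k in (U : Filter κ), |f k| ≤ C) : ∃ a, Tendsto f U (nhds a) := by
  obtain ⟨a, -, ha⟩ := (isCompact_Icc (a := -C) (b := C)).ultrafilter_le_nhds (U.map f) (by
    rw [le_principal_iff]
    exact h.mono fun k hk => abs_le.1 hk)
  exact ⟨a, ha⟩

/-- The parameter `s` of points with convergent coordinate `z` is bounded as soon as `x ≠ y` in that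
coordinate: `s R(y ^ q - x ^ q) = R(z ^ q - x ^ q)`, and `R(y ^ q - x ^ q)` stays away from `0`. -/
lemma param_bounded {κ : Type*} {l : Filter κ} {p : κ → ℕ} (hp : Tendsto p l atTop)
    {s t z : κ → ℝ} {x y z₀ : ℝ} (hxy : x ≠ y)
    (hst : ∀ k, s k ^ (2 * p k + 1) + t k ^ (2 * p k + 1) = 1)
    (hz : ∀ k, z k ^ (2 * p k + 1) = (t k * x) ^ (2 * p k + 1) + (s k * y) ^ (2 * p k + 1))
    (hlim : Tendsto z l (nhds z₀)) : ∃ C, ∀ᶠ k in l, |s k| ≤ C := by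
  have hd := tendsto_bop hp (tendsto_const_nhds (x := y) (f := l))
    (tendsto_const_nhds (x := -x)) (fun h => absurd (by linarith) hxy)
  have hb : bop y (-x) ≠ 0 := bop_ne_zero fun h => hxy (by linarith)
  set d := |bop y (-x)| with hddef
  have hd0 : 0 < d := abs_pos.2 hb
  refine ⟨(|z₀| + 1 + |x|) / (d / 2), ?_⟩
  filter_upwards [hd.abs.eventually (lt_mem_nhds (half_lt_self hd0)),
    hlim.abs.eventually (gt_mem_nhds (lt_add_one |z₀|))] with k h1 h2
  rw [le_div_iff₀ (half_pos hd0)]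
  have hkey : s k * oddRoot (p k) (y ^ (2 * p k + 1) + (-x) ^ (2 * p k + 1)) =
      oddRoot (p k) (z k ^ (2 * p k + 1) + (-x) ^ (2 * p k + 1)) := by
    rw [← oddRoot_pow_mul, hz]
    congr 1
    rw [neg_odd_pow, mul_pow, mul_pow]
    linear_combination (-x ^ (2 * p k + 1)) * hst k
  have := abs_oddRoot_add_le (p k) (z k) (-x)
  rw [← hkey, abs_mul, abs_neg] at this
  have h3 := mul_le_mul_of_nonneg_left h1.le (abs_nonneg (s k))
  linarith

/-- The coordinatewise content of the upper limit: the relation `lim R((t x) ^ q + (s y) ^ q) = z`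
determines `z` by four parameters that do not depend on `(x, y)`. -/
lemma exists_params {κ : Type*} (U : Ultrafilter κ) {p : κ → ℕ} (hp : Tendsto p U atTop)
    {s t : κ → ℝ} {S T : ℝ} (hs : Tendsto s U (nhds S)) (ht : Tendsto t U (nhds T)) :
    ∃ r w : ℝ, ∀ x y z : ℝ,
      Tendsto (fun k => oddRoot (p k) ((t k * x) ^ (2 * p k + 1) + (s k * y) ^ (2 * p k + 1))) U
        (nhds z) →
      Fop (Finset.univ : Finset (Fin 4)) ![T * x, r * x, S * y, w * y] = z := by
  have hreg : ∀ x y z : ℝ, (T * x = -(S * y) → S * y = 0) →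
      Tendsto (fun k => oddRoot (p k) ((t k * x) ^ (2 * p k + 1) + (s k * y) ^ (2 * p k + 1))) U
        (nhds z) → z = bop (T * x) (S * y) := fun x y z h hz =>
    tendsto_nhds_unique hz (tendsto_bop hp (ht.mul_const x) (hs.mul_const y) h)
  by_cases hST : S = 0 ∨ T = 0
  · have hc : ∀ x y : ℝ, T * x = -(S * y) → S * y = 0 := by
      rintro x y h
      rcases hST with h0 | h0
      · rw [h0, zero_mul]
      · rw [h0, zero_mul] at h
        linarith
    refine ⟨0, 0, fun x y z hz => ?_⟩
    rw [hreg x y z (hc x y) hz, zero_mul, zero_mul, Fop_pair (hc x y)]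
  push Not at hST
  obtain ⟨hS, hT⟩ := hST
  have hbound : ∀ k, |oddRoot (p k) ((t k * S) ^ (2 * p k + 1) + (s k * -T) ^ (2 * p k + 1))| ≤
      max |t k * S| |s k * -T| * oddRoot (p k) 2 := fun k => abs_oddRoot_add_le_max _ _ _
  have hblim : Tendsto (fun k => max |t k * S| |s k * -T| * oddRoot (p k) 2) U
      (nhds |S * T|) := by
    have h2 := tendsto_oddRoot hp (tendsto_const_nhds (x := (2 : ℝ)) (f := (U : Filter κ)))
      two_ne_zero
    rw [Real.sign_of_pos two_pos] at h2
    have := (((ht.mul_const S).abs).max ((hs.mul_const (-T)).abs)).mul h2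
    rwa [mul_neg, abs_neg, mul_comm T S, max_self, mul_one] at this
  obtain ⟨Λ, hΛ⟩ := U.exists_tendsto_of_bounded (C := |S * T| + 1) (by
    filter_upwards [hblim.eventually (gt_mem_nhds (lt_add_one |S * T|))] with k hk
    exact (hbound k).trans hk.le)
  have hΛle : |Λ| ≤ |S * T| := le_of_tendsto_of_tendsto' hΛ.abs hblim hbound
  -- A cancelling coordinate is the multiple `x / S` of `(S, -T)`, hence its limit is `x / S * Λ`.
  have hsing : ∀ x y z : ℝ, T * x = -(S * y) →
      Tendsto (fun k => oddRoot (p k) ((t k * x) ^ (2 * p k + 1) + (s k * y) ^ (2 * p k + 1))) U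
        (nhds z) → z = x / S * Λ := by
    intro x y z h hz
    refine tendsto_nhds_unique hz ((hΛ.const_mul (x / S)).congr fun k => ?_)
    rw [← oddRoot_pow_mul]
    congr 1
    rw [mul_add, ← mul_pow, ← mul_pow]
    have hy : y = -(T * x) / S := by rw [h]; field_simp
    congr 2
    · field_simp
    · rw [hy]; field_simp
  by_cases hΛST : Λ = S * T
  · refine ⟨T, 0, fun x y z hz => ?_⟩
    rw [zero_mul]
    by_cases h : T * x = -(S * y)
    · rw [hsing x y z h hz, h, Fop_cancel', ← h, hΛST]
      field_simp
    · rw [hreg x y z (fun h' => absurd h' h) hz, Fop_double fun h' => absurd h' h]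
  · refine ⟨0, -Λ / T, fun x y z hz => ?_⟩
    rw [zero_mul]
    by_cases h : T * x = -(S * y)
    · rw [hsing x y z h hz, h, Fop_cancel]
      have hy : y = -(T * x) / S := by rw [h]; field_simp
      rw [hy]
      field_simp
    · rw [hreg x y z (fun h' => absurd h' h) hz, Fop_absorb _ fun h' => absurd h' h]
      rcases hΛle.lt_or_eq with hlt | heq
      · rcases eq_or_ne y 0 with rfl | hy
        · right; simp
        · left
          rw [abs_mul, abs_mul, abs_div, abs_neg]
          rw [abs_mul] at hlt
          have hTpos := abs_pos.2 hT
          exact mul_lt_mul_of_pos_right ((div_lt_iff₀ hTpos).2 hlt) (abs_pos.2 hy)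
      · right
        rcases abs_eq_abs.1 heq with h1 | h1
        · exact absurd h1 hΛST
        · rw [h1]
          field_simp

/-- `D^∞(x,y)` is the Kuratowski–Painlevé limit of the `φ_p`-lines:
it is contained in the lower limit and contains the upper limit. -/
theorem stmt17 (n : ℕ) (x y : Fin n → ℝ) (hxy : x ≠ y) :
    (∀ z ∈ fLine x y, ∃ u : ℕ → (Fin n → ℝ),
      (∀ p : ℕ, u p ∈ phiLine p x y) ∧ Filter.Tendsto u Filter.atTop (nhds z)) ∧
    (∀ φ : ℕ → ℕ, StrictMono φ → ∀ u : ℕ → (Fin n → ℝ),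
      (∀ k : ℕ, u k ∈ phiLine (φ k) x y) → ∀ z : Fin n → ℝ,
      Filter.Tendsto u Filter.atTop (nhds z) → z ∈ fLine x y) := by
  refine ⟨lower_limit x y, fun φ hφ u hu z hz => ?_⟩
  choose s t hst hu using hu
  have hst' : ∀ k, s k ^ (2 * φ k + 1) + t k ^ (2 * φ k + 1) = 1 := fun k => by
    have := oddRoot_pow (φ k) (s k ^ (2 * φ k + 1) + t k ^ (2 * φ k + 1))
    rw [hst k, one_pow] at this
    exact this.symm
  let U : Ultrafilter ℕ := Ultrafilter.of atTop
  have hU : (U : Filter ℕ) ≤ atTop := Ultrafilter.of_le atTop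
  have hp : Tendsto φ U atTop := hφ.tendsto_atTop.mono_left hU
  have hz' : ∀ i, Tendsto (fun k => u k i) U (nhds (z i)) := fun i =>
    (tendsto_pi_nhds.1 hz i).mono_left hU
  obtain ⟨i₀, hi₀⟩ := Function.ne_iff.1 hxy
  obtain ⟨C, hC⟩ := param_bounded hp hi₀ hst' (z := fun k => u k i₀)
    (fun k => by rw [hu k, oddRoot_pow]) (hz' i₀)
  obtain ⟨S, hS⟩ := U.exists_tendsto_of_bounded hC
  obtain ⟨T, hT⟩ := U.exists_tendsto_of_bounded (f := t) (C := 1 + C) (by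
    filter_upwards [hC] with k hk
    have h1 : oddRoot (φ k) (1 ^ (2 * φ k + 1) + (-s k) ^ (2 * φ k + 1)) = t k :=
      oddRoot_eq (by rw [neg_odd_pow, one_pow]; linarith [hst' k])
    have h2 := abs_oddRoot_add_le (φ k) 1 (-s k)
    rw [h1, abs_one, abs_neg] at h2
    linarith)
  obtain ⟨r, w, hrw⟩ := exists_params U hp hS hT
  refine ⟨T, r, S, w, ?_, funext fun i => (hrw (x i) (y i) (z i) ?_).symm⟩
  · have := hrw 1 1 1 (tendsto_const_nhds.congr fun k => by
      rw [mul_one, mul_one, add_comm, hst k])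
    simpa using this
  · refine (hz' i).congr fun k => ?_
    rw [hu k]
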